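/- arXiv:2103.15271 — 8 statements merged into one kernel-verified Lean document; each statement's English description precedes it below -/
import Mathlib

section
/- Let m, n ≥ 1, let A : Matrix (Fin m) (Fin n) EReal have no +∞ entries, and let b : Fin m → EReal have no +∞ entries. Define x*(A,b) : Fin n → EReal by x*_j = ⨅_{i} s(b_i, A i j), where s(b,a) = +∞ if a = -∞ and s(b,a) = b - a (EReal subtraction) otherwise. Then x*(A,b) is a subsolution of the system A ⊗ x = b, i.e., for every i, ⨆_j (A i j + x*_j) ≤ b_i. -/
open scoped BigOperators

noncomputable section

/-- Max-plus product: `(A ⊗ x)_i = ⨆_j (A i j + x_j)` in `EReal`. -/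
def maxPlus {m n : ℕ} (A : Matrix (Fin m) (Fin n) EReal) (x : Fin n → EReal)
    (i : Fin m) : EReal :=
  ⨆ j, A i j + x j

/-- Auxiliary subtraction: `s(b,a) = +∞` if `a = -∞`, else `b - a`. -/
def sSub (b a : EReal) : EReal := if a = ⊥ then ⊤ else b - a

/-- Greatest subsolution `x*(A,b)_j = ⨅_i s(b_i, A i j)`. -/
def xstar {m n : ℕ} (A : Matrix (Fin m) (Fin n) EReal) (b : Fin m → EReal)
    (j : Fin n) : EReal :=
  ⨅ i, sSub (b i) (A i j)

/-- Objective function `F(x)_i = ⨆_j (A i j + x_j)` for real vectors `x`. -/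
def objF {m n : ℕ} (A : Matrix (Fin m) (Fin n) EReal) (x : Fin n → ℝ)
    (i : Fin m) : EReal :=
  ⨆ j, A i j + (x j : EReal)

/-- `J = {j | k_j > 0}` as a finite set. -/
def Jset {n : ℕ} (k : Fin n → ℝ) : Finset (Fin n) :=
  Finset.univ.filter (fun j => 0 < k j)

/-- Greatest lower bound `b_i = ((∑_{j ∈ J} k_j * A i j) + c) / (∑_{j ∈ J} k_j)`. -/
def glb {m n : ℕ} (A : Matrix (Fin m) (Fin n) EReal) (k : Fin n → ℝ) (c : ℝ)
    (i : Fin m) : EReal :=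
  ((∑ j ∈ Jset k, (k j : EReal) * A i j) + (c : EReal)) /
    ((∑ j ∈ Jset k, k j : ℝ) : EReal)

/-- `xt` is a globally optimal solution of the problem `(A, k, c)`. -/
def IsOptimal {m n : ℕ} (A : Matrix (Fin m) (Fin n) EReal) (k : Fin n → ℝ)
    (c : ℝ) (xt : Fin n → ℝ) : Prop :=
  (∑ j, k j * xt j = c) ∧
    ∀ x : Fin n → ℝ, (∑ j, k j * x j = c) → ∀ i, objF A xt i ≤ objF A x i

-- When `a = ⊤`, this rests on the conventions `b - ⊤ = ⊥` and `⊤ + ⊥ = ⊥`.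
theorem add_le_of_le_sSub {a b x : EReal} (h : x ≤ sSub b a) : a + x ≤ b := by
  by_cases ha : a = ⊥
  · simp [ha]
  · have hsub : x ≤ b - a := by rwa [sSub, if_neg ha] at h
    rw [add_comm]
    exact EReal.add_le_of_le_sub hsub

theorem stmt_0_general {ι κ : Sort*} (A : ι → κ → EReal) (b : ι → EReal) (i : ι) :
    ⨆ j, (A i j + ⨅ i', sSub (b i') (A i' j)) ≤ b i :=
  iSup_le fun _ => add_le_of_le_sSub (iInf_le _ i)

theorem stmt_0 {m n : ℕ} (hm : 1 ≤ m) (hn : 1 ≤ n)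
    (A : Matrix (Fin m) (Fin n) EReal) (hA : ∀ i j, A i j ≠ ⊤)
    (b : Fin m → EReal) (hb : ∀ i, b i ≠ ⊤) :
    ∀ i, maxPlus A (xstar A b) i ≤ b i :=
  stmt_0_general A b
end
end

section
/- Let m, n ≥ 1, let A : Matrix (Fin m) (Fin n) EReal have no +∞ entries, and let b : Fin m → EReal have no +∞ entries. Define x*(A,b) : Fin n → EReal by x*_j = ⨅_{i} s(b_i, A i j), where s(b,a) = +∞ if a = -∞ and s(b,a) = b - a (EReal subtraction) otherwise. Then x*(A,b) is the greatest subsolution of A ⊗ x = b: for every x̃ : Fin n → EReal, if ⨆_j (A i j + x̃_j) ≤ b_i for every i, then x̃_j ≤ x*_j for every j. In particular, every solution x̃ (i.e., with ⨆_j (A i j + x̃_j) = b_i for all i) satisfies x̃ ≤ x*(A,b). -/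
open scoped BigOperators

noncomputable section

theorem le_sSub_iff {a b x : EReal} (h : a ≠ ⊤ ∨ b ≠ ⊤) : x ≤ sSub b a ↔ a + x ≤ b := by
  unfold sSub
  split_ifs with ha
  · simp [ha]
  · rw [EReal.le_sub_iff_add_le (.inl ha) h, add_comm]

/- Residuation: each inequality `A i j + x j ≤ b i` is an upper bound on the single coordinate
`x j`, and `xstar A b j` is the least of these bounds. -/
theorem stmt_1_general {m n : ℕ} {A : Matrix (Fin m) (Fin n) EReal} {b : Fin m → EReal}
    (h : ∀ i j, A i j ≠ ⊤ ∨ b i ≠ ⊤) (x : Fin n → EReal) :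
    (∀ i, maxPlus A x i ≤ b i) ↔ ∀ j, x j ≤ xstar A b j := by
  simp only [maxPlus, xstar, iSup_le_iff, le_iInf_iff, le_sSub_iff (h _ _)]
  exact forall_comm

theorem stmt_1 {m n : ℕ} (hm : 1 ≤ m) (hn : 1 ≤ n)
    (A : Matrix (Fin m) (Fin n) EReal) (hA : ∀ i j, A i j ≠ ⊤)
    (b : Fin m → EReal) (hb : ∀ i, b i ≠ ⊤) :
    (∀ xt : Fin n → EReal, (∀ i, maxPlus A xt i ≤ b i) → ∀ j, xt j ≤ xstar A b j) ∧
      (∀ xt : Fin n → EReal, (∀ i, maxPlus A xt i = b i) → ∀ j, xt j ≤ xstar A b j) := by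
  have le_xstar (x : Fin n → EReal) : (∀ i, maxPlus A x i ≤ b i) → ∀ j, x j ≤ xstar A b j :=
    (stmt_1_general (fun i j => .inl (hA i j)) x).mp
  exact ⟨le_xstar, fun x h => le_xstar x fun i => (h i).le⟩
end
end

section
/- Let m, n ≥ 1, let A : Matrix (Fin m) (Fin n) EReal have no +∞ entries, and let b : Fin m → EReal have no +∞ entries, with x*(A,b) defined by x*_j = ⨅_{i} s(b_i, A i j) (s(b,a) = +∞ if a = -∞, else b - a). Then the system A ⊗ x = b has a solution x̃ : Fin n → EReal (i.e., ⨆_j (A i j + x̃_j) = b_i for all i) if and only if x*(A,b) itself is a solution, i.e., ⨆_j (A i j + x*_j) = b_i for all i. -/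
open scoped BigOperators

noncomputable section

/-! Entrywise, `s(b, a)` is the residual of `b` by `a`: `a + x ≤ b ↔ x ≤ s(b, a)`. Hence
`x*(A,b)` is the greatest solution of `A ⊗ x ≤ b`. It lies above every exact solution, so
monotonicity of `x ↦ A ⊗ x` squeezes `A ⊗ x*(A,b)` between `b` and `b`. -/

-- `EReal` sets `⊤ - ⊤ = ⊥`, whereas every `x` satisfies `⊤ + x ≤ ⊤`.
theorem add_le_iff_le_sSub {a b x : EReal} (hab : a ≠ ⊤ ∨ b ≠ ⊤) :
    a + x ≤ b ↔ x ≤ sSub b a := by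
  unfold sSub
  split_ifs with ha
  · simp [ha]
  · rw [EReal.le_sub_iff_add_le (.inl ha) hab, add_comm]

theorem iSup_add_le_iff_le_iInf_sSub {ι κ : Type*} {A : Matrix ι κ EReal} {b : ι → EReal}
    (hAb : ∀ i j, A i j ≠ ⊤ ∨ b i ≠ ⊤) (x : κ → EReal) :
    (∀ i, (⨆ j, A i j + x j) ≤ b i) ↔ ∀ j, x j ≤ ⨅ i, sSub (b i) (A i j) := by
  simp only [iSup_le_iff, le_iInf_iff, add_le_iff_le_sSub (hAb _ _)]
  exact forall_comm

theorem stmt_2_general {ι κ : Type*} (A : Matrix ι κ EReal) (b : ι → EReal)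
    (hAb : ∀ i j, A i j ≠ ⊤ ∨ b i ≠ ⊤) :
    (∃ x : κ → EReal, ∀ i, (⨆ j, A i j + x j) = b i) ↔
      ∀ i, (⨆ j, A i j + ⨅ k, sSub (b k) (A k j)) = b i := by
  refine ⟨fun ⟨x, hx⟩ i => ?_, fun h => ⟨_, h⟩⟩
  have hx_le : ∀ j, x j ≤ ⨅ k, sSub (b k) (A k j) :=
    (iSup_add_le_iff_le_iInf_sSub hAb x).1 fun k => (hx k).le
  apply le_antisymm
  · exact (iSup_add_le_iff_le_iInf_sSub hAb _).2 (fun _ => le_rfl) i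
  · calc
      b i = ⨆ j, A i j + x j := (hx i).symm
      _ ≤ ⨆ j, A i j + ⨅ k, sSub (b k) (A k j) := by gcongr with j; exact hx_le j

theorem stmt_2 {m n : ℕ} (hm : 1 ≤ m) (hn : 1 ≤ n)
    (A : Matrix (Fin m) (Fin n) EReal) (hA : ∀ i j, A i j ≠ ⊤)
    (b : Fin m → EReal) (hb : ∀ i, b i ≠ ⊤) :
    (∃ xt : Fin n → EReal, ∀ i, maxPlus A xt i = b i) ↔
      (∀ i, maxPlus A (xstar A b) i = b i) :=
  stmt_2_general A b fun i j => .inl (hA i j)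
end
end

section
/- (Theorem 1, part i) Under the standing assumptions on the global optimization problem, the vector b defined by b_i = ((∑_{j∈J} (k_j : EReal) * A i j) + c) / (∑_{j∈J} k_j) is a lower bound: for every x ∈ 𝒳 and every i, F_i(x) = ⨆_j (A i j + (x_j : EReal)) ≥ b_i. -/
open scoped BigOperators

noncomputable section

/-!
Multiplication by a nonnegative real number distributes over addition in `EReal`, even at `±∞`.
Hence, if `∑ j, k j * x j = c`, the numerator of `b_i` is the weighted sum
`∑ j ∈ J, k j * (A i j + x j)`, so `b_i` is a weighted average of the terms `A i j + x j`, and an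
average is at most the supremum.
-/

section ERealSums

variable {ι : Type*} (s : Finset ι)

theorem ereal_coe_sum (f : ι → ℝ) : ((∑ j ∈ s, f j : ℝ) : EReal) = ∑ j ∈ s, (f j : EReal) :=
  map_sum (⟨⟨Real.toEReal, EReal.coe_zero⟩, EReal.coe_add⟩ : ℝ →+ EReal) f s

variable {s} {w : ι → EReal}

theorem ereal_sum_mul_of_nonneg (hw : ∀ j ∈ s, 0 ≤ w j) (a : EReal) :
    (∑ j ∈ s, w j) * a = ∑ j ∈ s, w j * a := by
  induction s using Finset.cons_induction with
  | empty => simp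
  | cons j s hj ih =>
    rw [Finset.forall_mem_cons] at hw
    rw [Finset.sum_cons, Finset.sum_cons,
      EReal.right_distrib_of_nonneg hw.1 (Finset.sum_nonneg hw.2), ih hw.2]

theorem ereal_sum_mul_add_of_nonneg_of_ne_top (hw : ∀ j ∈ s, 0 ≤ w j)
    (hw_top : ∀ j ∈ s, w j ≠ ⊤) (f g : ι → EReal) :
    ∑ j ∈ s, w j * (f j + g j) = ∑ j ∈ s, w j * f j + ∑ j ∈ s, w j * g j := by
  rw [← Finset.sum_add_distrib]
  exact Finset.sum_congr rfl fun j hj =>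
    EReal.left_distrib_of_nonneg_of_ne_top (hw j hj) (hw_top j hj) (f j) (g j)

theorem ereal_sum_mul_le_sum_mul_iSup (hw : ∀ j ∈ s, 0 ≤ w j) (f : ι → EReal) :
    ∑ j ∈ s, w j * f j ≤ (∑ j ∈ s, w j) * ⨆ j, f j := by
  rw [ereal_sum_mul_of_nonneg hw]
  exact Finset.sum_le_sum fun j hj => mul_le_mul_of_nonneg_left (le_iSup f j) (hw j hj)

end ERealSums

section Jset

variable {n : ℕ} {k : Fin n → ℝ}

theorem mem_Jset {j : Fin n} : j ∈ Jset k ↔ 0 < k j := by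
  simp [Jset]

theorem sum_Jset_pos (hk : ∀ j, 0 ≤ k j) (hk0 : ∃ j, k j ≠ 0) : 0 < ∑ j ∈ Jset k, k j := by
  obtain ⟨j, hj⟩ := hk0
  exact Finset.sum_pos (fun _ => mem_Jset.1) ⟨j, mem_Jset.2 ((hk j).lt_of_ne' hj)⟩

theorem sum_Jset_mul (hk : ∀ j, 0 ≤ k j) (x : Fin n → ℝ) :
    ∑ j ∈ Jset k, k j * x j = ∑ j, k j * x j := by
  refine Finset.sum_subset (Finset.subset_univ _) fun j _ hj => ?_
  have hkj : k j = 0 := (not_lt.1 (mt mem_Jset.2 hj)).antisymm (hk j)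
  rw [hkj, zero_mul]

end Jset

theorem sum_Jset_mul_add_le_mul_objF {m n : ℕ} (A : Matrix (Fin m) (Fin n) EReal)
    (k x : Fin n → ℝ) (i : Fin m) :
    ∑ j ∈ Jset k, (k j : EReal) * A i j + ((∑ j ∈ Jset k, k j * x j : ℝ) : EReal) ≤
      ((∑ j ∈ Jset k, k j : ℝ) : EReal) * objF A x i := by
  have hk : ∀ j ∈ Jset k, (0 : EReal) ≤ k j := fun j hj =>
    EReal.coe_nonneg.2 (mem_Jset.1 hj).le
  calc
    _ = ∑ j ∈ Jset k, (k j : EReal) * A i j + ∑ j ∈ Jset k, (k j : EReal) * (x j : EReal) := by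
      simp only [ereal_coe_sum, EReal.coe_mul]
    _ = ∑ j ∈ Jset k, (k j : EReal) * (A i j + x j) :=
      (ereal_sum_mul_add_of_nonneg_of_ne_top hk (fun j _ => EReal.coe_ne_top (k j)) _ _).symm
    _ ≤ (∑ j ∈ Jset k, (k j : EReal)) * objF A x i :=
      ereal_sum_mul_le_sum_mul_iSup hk _
    _ = _ := by rw [ereal_coe_sum]

theorem stmt_3_general {m n : ℕ} (A : Matrix (Fin m) (Fin n) EReal) {k : Fin n → ℝ}
    (hk : ∀ j, 0 ≤ k j) (hk0 : ∃ j, k j ≠ 0) {c : ℝ} {x : Fin n → ℝ}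
    (hx : ∑ j, k j * x j = c) (i : Fin m) : glb A k c i ≤ objF A x i := by
  have hpos : (0 : EReal) < ((∑ j ∈ Jset k, k j : ℝ) : EReal) :=
    EReal.coe_pos.2 (sum_Jset_pos hk hk0)
  rw [glb, EReal.div_le_iff_le_mul hpos (EReal.coe_ne_top _), ← hx, ← sum_Jset_mul hk x]
  exact sum_Jset_mul_add_le_mul_objF A k x i

theorem stmt_3 {m n : ℕ} (hm : 1 ≤ m) (hn : 1 ≤ n)
    (A : Matrix (Fin m) (Fin n) EReal) (hA : ∀ i j, A i j ≠ ⊤)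
    (k : Fin n → ℝ) (hk : ∀ j, 0 ≤ k j) (hk0 : ∃ j, k j ≠ 0) (c : ℝ)
    (hrow : ∀ i, ∃ j, A i j ≠ ⊥)
    (hcol : ∀ j, (∀ i, A i j = ⊥) → 0 < k j) :
    ∀ x : Fin n → ℝ, (∑ j, k j * x j = c) → ∀ i, glb A k c i ≤ objF A x i :=
  fun _ hx i => stmt_3_general A hk hk0 hx i
end
end

section
/- (Lemma 2, part i) Under the standing assumptions on the global optimization problem, if the problem is solvable — i.e., there exists x̃ ∈ 𝒳 such that F_i(x) ≥ F_i(x̃) for every x ∈ 𝒳 and every i — then the greatest lower bound b is finite: for every i, b_i ≠ -∞ and b_i ≠ +∞ (b_i is a real number). -/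
open scoped BigOperators

noncomputable section

/-!
`b_i` can fail to be real only if `A i p = -∞` for some `p ∈ J`. Then the coordinate `x_p` does not
contribute to `F_i`, so it can absorb the linear constraint while all other coordinates are made
arbitrarily negative, and `F_i` is unbounded below on `𝒳`. But at an optimal `x̃` the value
`F_i(x̃)` bounds `F_i` from below on `𝒳`, and it is not `-∞` because row `i` of `A`
is not identically `-∞`.
-/

section

variable {ι : Type*}

lemma exists_sum_mul_eq_forall_ne_eq {𝕜 : Type*} [DivisionRing 𝕜] [Fintype ι]
    {k : ι → 𝕜} {p : ι} (hp : k p ≠ 0) (c : 𝕜) (y : ι → 𝕜) :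
    ∃ x : ι → 𝕜, ∑ j, k j * x j = c ∧ ∀ j ≠ p, x j = y j := by
  classical
  refine ⟨Function.update y p ((k p)⁻¹ * (c - ∑ j ∈ Finset.univ.erase p, k j * y j)), ?_,
    fun j hj => Function.update_of_ne hj _ _⟩
  have off_p : ∀ z, ∑ j ∈ Finset.univ.erase p, k j * Function.update y p z j
      = ∑ j ∈ Finset.univ.erase p, k j * y j := fun z =>
    Finset.sum_congr rfl fun j hj => by rw [Function.update_of_ne (Finset.ne_of_mem_erase hj)]
  rw [← Finset.add_sum_erase _ _ (Finset.mem_univ p), off_p, Function.update_self,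
    mul_inv_cancel_left₀ hp, sub_add_cancel]

lemma exists_add_coe_le {a : EReal} (ha : a ≠ ⊤) (u : ℝ) : ∃ y : ℝ, a + y ≤ u := by
  induction a with
  | bot => exact ⟨0, by simp⟩
  | coe r => exact ⟨u - r, by rw [← EReal.coe_add, add_sub_cancel]⟩
  | top => exact absurd rfl ha

lemma iSup_add_coe_ne_bot {a : ι → EReal} (ha : ∃ j, a j ≠ ⊥) (x : ι → ℝ) :
    ⨆ j, a j + (x j : EReal) ≠ ⊥ := by
  obtain ⟨j, hj⟩ := ha
  exact ne_bot_of_le_ne_bot (EReal.add_ne_bot_iff.mpr ⟨hj, EReal.coe_ne_bot (x j)⟩)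
    (le_iSup (fun j => a j + (x j : EReal)) j)

lemma exists_coe_eq_sum_coe_mul {s : Finset ι} (k : ι → ℝ) {a : ι → EReal}
    (ha_bot : ∀ j ∈ s, a j ≠ ⊥) (ha_top : ∀ j ∈ s, a j ≠ ⊤) :
    ∃ r : ℝ, (r : EReal) = ∑ j ∈ s, (k j : EReal) * a j := by
  refine Finset.sum_induction _ (fun z : EReal => ∃ r : ℝ, (r : EReal) = z) ?_
    ⟨0, EReal.coe_zero⟩ fun j hj => ?_
  · rintro _ _ ⟨r, rfl⟩ ⟨t, rfl⟩
    exact ⟨r + t, EReal.coe_add r t⟩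
  · exact ⟨k j * (a j).toReal, by rw [EReal.coe_mul, EReal.coe_toReal (ha_top j hj) (ha_bot j hj)]⟩

variable [Fintype ι] {a : ι → EReal} {k : ι → ℝ}

lemma exists_sum_mul_eq_iSup_add_coe_le (ha : ∀ j, a j ≠ ⊤) {p : ι} (hp : k p ≠ 0)
    (hap : a p = ⊥) (c u : ℝ) :
    ∃ x : ι → ℝ, ∑ j, k j * x j = c ∧ ⨆ j, a j + (x j : EReal) ≤ u := by
  choose y hy using fun j => exists_add_coe_le (ha j) u
  obtain ⟨x, hxc, hxy⟩ := exists_sum_mul_eq_forall_ne_eq hp c y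
  refine ⟨x, hxc, iSup_le fun j => ?_⟩
  rcases eq_or_ne j p with rfl | hj
  · simp [hap]
  · exact hxy j hj ▸ hy j

lemma ne_bot_of_forall_le_iSup_add_coe (ha : ∀ j, a j ≠ ⊤) {c : ℝ} {l : EReal} (hl : l ≠ ⊥)
    (hbound : ∀ x : ι → ℝ, ∑ j, k j * x j = c → l ≤ ⨆ j, a j + (x j : EReal))
    {p : ι} (hp : k p ≠ 0) : a p ≠ ⊥ := by
  intro hap
  obtain ⟨u, -, hul⟩ := EReal.lt_iff_exists_real_btwn.mp (bot_lt_iff_ne_bot.mpr hl)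
  obtain ⟨x, hxc, hxu⟩ := exists_sum_mul_eq_iSup_add_coe_le ha hp hap c u
  exact (hul.trans_le (hbound x hxc)).not_ge hxu

theorem stmt_6_general (ha : ∀ j, a j ≠ ⊤) (_hk : ∃ j, 0 < k j) {c : ℝ} {l : EReal}
    (hl : l ≠ ⊥)
    (hbound : ∀ x : ι → ℝ, ∑ j, k j * x j = c → l ≤ ⨆ j, a j + (x j : EReal)) :
    ∃ b : ℝ, ((∑ j with 0 < k j, (k j : EReal) * a j) + (c : EReal)) /
      ((∑ j with 0 < k j, k j : ℝ) : EReal) = b := by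
  have ha_bot : ∀ j ∈ Finset.univ.filter (0 < k ·), a j ≠ ⊥ := fun j hj =>
    ne_bot_of_forall_le_iSup_add_coe ha hl hbound (Finset.mem_filter.mp hj).2.ne'
  obtain ⟨r, hr⟩ := exists_coe_eq_sum_coe_mul k ha_bot fun j _ => ha j
  exact ⟨(r + c) / ∑ j with 0 < k j, k j, by rw [← hr, EReal.coe_div, EReal.coe_add]⟩

end

theorem stmt_6 {m n : ℕ} (hm : 1 ≤ m) (hn : 1 ≤ n)
    (A : Matrix (Fin m) (Fin n) EReal) (hA : ∀ i j, A i j ≠ ⊤)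
    (k : Fin n → ℝ) (hk : ∀ j, 0 ≤ k j) (hk0 : ∃ j, k j ≠ 0) (c : ℝ)
    (hrow : ∀ i, ∃ j, A i j ≠ ⊥)
    (hcol : ∀ j, (∀ i, A i j = ⊥) → 0 < k j)
    (hsolv : ∃ xt : Fin n → ℝ, IsOptimal A k c xt) :
    ∀ i, glb A k c i ≠ ⊥ ∧ glb A k c i ≠ ⊤ := by
  intro i
  obtain ⟨xt, -, hopt⟩ := hsolv
  obtain ⟨b, hb⟩ : ∃ b : ℝ, glb A k c i = b :=
    stmt_6_general (hA i) (hk0.imp fun j hj => (hk j).lt_of_ne' hj)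
      (iSup_add_coe_ne_bot (hrow i) xt) fun x hx => hopt x hx i
  exact hb ▸ ⟨EReal.coe_ne_bot b, EReal.coe_ne_top b⟩
end
end

section
/- (Theorem 3, sufficiency) Under the standing assumptions on the global optimization problem, if the problem is solvable and k_j > 0 for every j ∈ Fin n, then the globally optimal solution is unique: there is exactly one x̃ ∈ 𝒳 with F_i(x) ≥ F_i(x̃) for every x ∈ 𝒳 and every i. -/
open scoped BigOperators

noncomputable section

/-!
The objective commutes with pointwise suprema and is homogeneous under adding a constant to every
coordinate. If `x ≠ y` are feasible and all `k j` are positive, then `x ⊔ y` has weighted sum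
strictly larger than `c`, so lowering all its coordinates by a suitable `d > 0` gives a feasible
`z`. A finite row of the objective then satisfies `F z ≤ max (F x) (F y) - d`, so `x` and `y`
cannot both be optimal.
-/

section WeightedSum

variable {ι R : Type*} [Fintype ι]

theorem strictMono_sum_mul [Semiring R] [PartialOrder R] [IsStrictOrderedRing R] {k : ι → R}
    (hk : ∀ j, 0 < k j) : StrictMono fun x : ι → R => ∑ j, k j * x j := by
  intro x y hxy
  obtain ⟨hle, j, hj⟩ := Pi.lt_def.1 hxy
  exact Finset.sum_lt_sum (fun l _ => mul_le_mul_of_nonneg_left (hle l) (hk l).le)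
    ⟨j, Finset.mem_univ j, mul_lt_mul_of_pos_left hj (hk j)⟩

theorem exists_pos_sum_mul_sup_sub_eq [Field R] [LinearOrder R] [IsStrictOrderedRing R]
    {k x y : ι → R} (hk : ∀ j, 0 < k j) (hne : x ≠ y) (hxy : ∑ j, k j * x j = ∑ j, k j * y j) :
    ∃ d > 0, ∑ j, k j * ((x ⊔ y) j - d) = ∑ j, k j * x j := by
  have hmono := strictMono_sum_mul hk
  have hlt : x < x ⊔ y :=
    left_lt_sup.2 fun hyx => (hmono (hyx.lt_of_ne hne.symm)).ne hxy.symm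
  have hK : 0 < ∑ j, k j := by
    obtain ⟨j, -⟩ := Function.ne_iff.1 hne
    exact Finset.sum_pos (fun j _ => hk j) ⟨j, Finset.mem_univ j⟩
  refine ⟨(∑ j, k j * (x ⊔ y) j - ∑ j, k j * x j) / ∑ j, k j,
    div_pos (sub_pos.2 (hmono hlt)) hK, ?_⟩
  simp only [mul_sub, Finset.sum_sub_distrib, ← Finset.sum_mul]
  rw [mul_div_cancel₀ _ hK.ne', sub_sub_cancel]

end WeightedSum

section Objective

variable {m n : ℕ} {A : Matrix (Fin m) (Fin n) EReal} {i : Fin m}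

theorem objF_sup (x y : Fin n → ℝ) : objF A (x ⊔ y) i = objF A x i ⊔ objF A y i := by
  simp only [objF, ← iSup_sup_eq, max_add_add_left, Pi.sup_apply,
    EReal.coe_strictMono.monotone.map_max]

theorem objF_sub_const_le (x : Fin n → ℝ) (d : ℝ) :
    objF A (fun j => x j - d) i ≤ objF A x i - d := by
  refine iSup_le fun j => ?_
  rw [EReal.coe_sub, ← add_sub_assoc]
  exact EReal.sub_le_sub (le_iSup (fun j => A i j + (x j : EReal)) j) le_rfl

theorem objF_ne_top (htop : ∀ j, A i j ≠ ⊤) (x : Fin n → ℝ) : objF A x i ≠ ⊤ := by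
  rw [← lt_top_iff_ne_top, objF, ← Finset.sup_univ_eq_iSup, Finset.sup_lt_iff bot_lt_top]
  exact fun j _ => EReal.add_lt_top (htop j) (EReal.coe_ne_top _)

theorem objF_ne_bot (hbot : ∃ j, A i j ≠ ⊥) (x : Fin n → ℝ) : objF A x i ≠ ⊥ := by
  obtain ⟨j, hj⟩ := hbot
  have hterm : A i j + (x j : EReal) ≠ ⊥ := EReal.add_ne_bot_iff.2 ⟨hj, EReal.coe_ne_bot _⟩
  exact ne_bot_of_le_ne_bot hterm (le_iSup (fun j => A i j + (x j : EReal)) j)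

theorem objF_sub_const_lt (htop : ∀ j, A i j ≠ ⊤) (hbot : ∃ j, A i j ≠ ⊥) (x : Fin n → ℝ)
    {d : ℝ} (hd : 0 < d) : objF A (fun j => x j - d) i < objF A x i := by
  refine (objF_sub_const_le x d).trans_lt ?_
  lift objF A x i to ℝ using ⟨objF_ne_top htop x, objF_ne_bot hbot x⟩ with r
  exact_mod_cast sub_lt_self r hd

theorem exists_objF_lt_sup {k x y : Fin n → ℝ} (htop : ∀ j, A i j ≠ ⊤)
    (hbot : ∃ j, A i j ≠ ⊥) (hk : ∀ j, 0 < k j) (hne : x ≠ y)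
    (hxy : ∑ j, k j * x j = ∑ j, k j * y j) :
    ∃ z : Fin n → ℝ, ∑ j, k j * z j = ∑ j, k j * x j ∧
      objF A z i < objF A x i ⊔ objF A y i := by
  obtain ⟨d, hd, hsum⟩ := exists_pos_sum_mul_sup_sub_eq hk hne hxy
  exact ⟨fun j => (x ⊔ y) j - d, hsum,
    (objF_sub_const_lt htop hbot (x ⊔ y) hd).trans_eq (objF_sup x y)⟩

theorem IsOptimal.eq {k x y : Fin n → ℝ} {c : ℝ} (htop : ∀ j, A i j ≠ ⊤)
    (hbot : ∃ j, A i j ≠ ⊥) (hk : ∀ j, 0 < k j) (hx : IsOptimal A k c x)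
    (hy : IsOptimal A k c y) : x = y := by
  by_contra hne
  obtain ⟨z, hzx, hlt⟩ := exists_objF_lt_sup htop hbot hk hne (hx.1.trans hy.1.symm)
  have hz : ∑ j, k j * z j = c := hzx.trans hx.1
  exact hlt.not_ge (sup_le (hx.2 z hz i) (hy.2 z hz i))

end Objective

theorem stmt_13_general {m n : ℕ} {A : Matrix (Fin m) (Fin n) EReal} {i : Fin m}
    (htop : ∀ j, A i j ≠ ⊤) (hbot : ∃ j, A i j ≠ ⊥) {k : Fin n → ℝ} (hpos : ∀ j, 0 < k j)
    {c : ℝ} (hsolv : ∃ xt : Fin n → ℝ, IsOptimal A k c xt) :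
    ∃! xt : Fin n → ℝ, IsOptimal A k c xt :=
  existsUnique_of_exists_of_unique hsolv fun _ _ => IsOptimal.eq htop hbot hpos

theorem stmt_13 {m n : ℕ} (hm : 1 ≤ m) (hn : 1 ≤ n)
    (A : Matrix (Fin m) (Fin n) EReal) (hA : ∀ i j, A i j ≠ ⊤)
    (k : Fin n → ℝ) (hk : ∀ j, 0 ≤ k j) (hk0 : ∃ j, k j ≠ 0) (c : ℝ)
    (hrow : ∀ i, ∃ j, A i j ≠ ⊥)
    (hcol : ∀ j, (∀ i, A i j = ⊥) → 0 < k j)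
    (hsolv : ∃ xt : Fin n → ℝ, IsOptimal A k c xt)
    (hpos : ∀ j, 0 < k j) :
    ∃! xt : Fin n → ℝ, IsOptimal A k c xt :=
  stmt_13_general (hA ⟨0, hm⟩) (hrow ⟨0, hm⟩) hpos hsolv
end
end

section
/- (Theorem 3, necessity) Under the standing assumptions on the global optimization problem, if the problem is solvable and has a unique globally optimal solution (there is exactly one x̃ ∈ 𝒳 with F_i(x) ≥ F_i(x̃) for every x ∈ 𝒳 and every i), then k_j > 0 for every j ∈ Fin n. -/
open scoped BigOperators

noncomputable section

lemma objF_mono {m n : ℕ} (A : Matrix (Fin m) (Fin n) EReal) : Monotone (objF A) :=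
  fun _ _ hxy _ => iSup_mono fun j => add_le_add_right (EReal.coe_le_coe (hxy j)) _

lemma sum_mul_update_of_eq_zero {ι R : Type*} [Fintype ι] [DecidableEq ι]
    [NonUnitalNonAssocSemiring R] {k : ι → R} {j : ι} (hj : k j = 0) (x : ι → R) (a : R) :
    ∑ l, k l * Function.update x j a l = ∑ l, k l * x l := by
  refine Finset.sum_congr rfl fun l _ => ?_
  obtain rfl | hlj := eq_or_ne l j
  · simp only [hj, zero_mul]
  · rw [Function.update_of_ne hlj]

section

variable {m n : ℕ} {A : Matrix (Fin m) (Fin n) EReal} {k : Fin n → ℝ} {c : ℝ}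

lemma IsOptimal.of_le {x y : Fin n → ℝ} (hx : IsOptimal A k c x) (hyx : y ≤ x)
    (hy : ∑ j, k j * y j = c) : IsOptimal A k c y :=
  ⟨hy, fun z hz i => (objF_mono A hyx i).trans (hx.2 z hz i)⟩

lemma IsOptimal.update_of_eq_zero {x : Fin n → ℝ} {j : Fin n} {a : ℝ}
    (hx : IsOptimal A k c x) (hj : k j = 0) (ha : a ≤ x j) :
    IsOptimal A k c (Function.update x j a) :=
  hx.of_le (update_le_self_iff.mpr ha) ((sum_mul_update_of_eq_zero hj x a).trans hx.1)

theorem stmt_14_general (huniq : ∃! x : Fin n → ℝ, IsOptimal A k c x) (j : Fin n) :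
    k j ≠ 0 := by
  intro hj
  obtain ⟨x, hx⟩ := huniq.exists
  have hlowered : IsOptimal A k c (Function.update x j (x j - 1)) :=
    hx.update_of_eq_zero hj (sub_one_lt (x j)).le
  have hfixed : x j - 1 = x j := Function.update_eq_self_iff.mp (huniq.unique hlowered hx)
  exact (sub_one_lt (x j)).ne hfixed

end

theorem stmt_14 {m n : ℕ} (hm : 1 ≤ m) (hn : 1 ≤ n)
    (A : Matrix (Fin m) (Fin n) EReal) (hA : ∀ i j, A i j ≠ ⊤)
    (k : Fin n → ℝ) (hk : ∀ j, 0 ≤ k j) (hk0 : ∃ j, k j ≠ 0) (c : ℝ)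
    (hrow : ∀ i, ∃ j, A i j ≠ ⊥)
    (hcol : ∀ j, (∀ i, A i j = ⊥) → 0 < k j)
    (hsolv : ∃ xt : Fin n → ℝ, IsOptimal A k c xt)
    (huniq : ∃! xt : Fin n → ℝ, IsOptimal A k c xt) :
    ∀ j, 0 < k j :=
  fun j => (hk j).lt_of_ne' (stmt_14_general huniq j)
end
end

section
/- (Theorem 3, combined) Under the standing assumptions on the global optimization problem, assume the problem is solvable. Then the problem has a unique globally optimal solution if and only if k_j > 0 for every j ∈ Fin n. -/
open scoped BigOperators

noncomputable section

/-!
A max-plus linear form commutes with `⊔`; if it has no coefficient `⊤` and some finite coefficient,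
it strictly increases when every coordinate does. If `x ≠ y` are both optimal and all weights are
positive, then `x ⊔ y` has weighted sum larger than `c`, so lowering all its coordinates by the same
positive amount gives a feasible point whose value in such a row is smaller than the common optimal
value, a contradiction.
Conversely, a coordinate of weight zero can be lowered at will without losing optimality.
-/

section WeightedHyperplane

variable {κ R : Type*} [Fintype κ]

/-- `x` minimizes `F` over the hyperplane `∑ j, k j * x j = c`. For a vector-valued `F` the
codomain carries the product order, so this is global optimality in every component. -/
def IsHyperplaneMin {β : Type*} [Preorder β] [Semiring R] (F : (κ → R) → β) (k : κ → R) (c : R)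
    (x : κ → R) : Prop :=
  k ⬝ᵥ x = c ∧ IsMinOn F {y | k ⬝ᵥ y = c} x

theorem IsHyperplaneMin.apply {ι : Type*} {β : ι → Type*} [∀ i, Preorder (β i)] [Semiring R]
    {F : (κ → R) → ∀ i, β i} {k : κ → R} {c : R} {x : κ → R} (hx : IsHyperplaneMin F k c x)
    (i : ι) : IsHyperplaneMin (fun y ↦ F y i) k c x :=
  ⟨hx.1, fun _ hy ↦ hx.2 hy i⟩

theorem dotProduct_lt_dotProduct_of_pos_left [Semiring R] [PartialOrder R] [IsStrictOrderedRing R]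
    {k x y : κ → R} (hk : ∀ j, 0 < k j) (hxy : x < y) : k ⬝ᵥ x < k ⬝ᵥ y := by
  obtain ⟨hle, j, hj⟩ := Pi.lt_def.mp hxy
  exact Finset.sum_lt_sum (fun l _ ↦ mul_le_mul_of_nonneg_left (hle l) (hk l).le)
    ⟨j, Finset.mem_univ j, mul_lt_mul_of_pos_left hj (hk j)⟩

theorem exists_strongLT_dotProduct_eq [Field R] [LinearOrder R] [IsStrictOrderedRing R]
    {k w : κ → R} {c : R} (hk : 0 < ∑ j, k j) (hw : c < k ⬝ᵥ w) :
    ∃ z, k ⬝ᵥ z = c ∧ StrongLT z w := by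
  set d := (k ⬝ᵥ w - c) / ∑ j, k j with hd
  have hd_pos : 0 < d := div_pos (sub_pos.mpr hw) hk
  refine ⟨w - d • 1, ?_, fun j ↦ by simpa using hd_pos⟩
  rw [dotProduct_sub, dotProduct_smul, dotProduct_one, smul_eq_mul, hd,
    div_mul_cancel₀ _ hk.ne', sub_sub_cancel]

theorem exists_strongLT_sup_dotProduct_eq [Field R] [LinearOrder R] [IsStrictOrderedRing R]
    {k x y : κ → R} {c : R} (hk : ∀ j, 0 < k j) (hx : k ⬝ᵥ x = c) (hy : k ⬝ᵥ y = c)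
    (hne : x ≠ y) : ∃ z, k ⬝ᵥ z = c ∧ StrongLT z (x ⊔ y) := by
  obtain ⟨j, -⟩ := Function.ne_iff.mp hne
  refine exists_strongLT_dotProduct_eq
    (Finset.sum_pos (fun l _ ↦ hk l) ⟨j, Finset.mem_univ j⟩) ?_
  rcases left_or_right_lt_sup hne with hlt | hlt
  · exact hx ▸ dotProduct_lt_dotProduct_of_pos_left hk hlt
  · exact hy ▸ dotProduct_lt_dotProduct_of_pos_left hk hlt

theorem IsHyperplaneMin.unique {β : Type*} [LinearOrder β] [Field R] [LinearOrder R]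
    [IsStrictOrderedRing R] {F : (κ → R) → β} {k x y : κ → R} {c : R}
    (hF_sup : ∀ u v, F (u ⊔ v) ≤ F u ⊔ F v) (hF_lt : ∀ u v, StrongLT u v → F u < F v)
    (hk : ∀ j, 0 < k j) (hx : IsHyperplaneMin F k c x) (hy : IsHyperplaneMin F k c y) :
    x = y := by
  by_contra hne
  obtain ⟨z, hz, hz_lt⟩ := exists_strongLT_sup_dotProduct_eq hk hx.1 hy.1 hne
  have : F z < F z := calc
    F z < F (x ⊔ y) := hF_lt _ _ hz_lt
    _ ≤ F x ⊔ F y := hF_sup x y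
    _ ≤ F z := sup_le (hx.2 hz) (hy.2 hz)
  exact this.false

theorem IsHyperplaneMin.sub_single {β : Type*} [Preorder β] [Ring R] [PartialOrder R]
    [IsOrderedRing R] [DecidableEq κ] {F : (κ → R) → β} {k x : κ → R} {c t : R} {j : κ}
    (hF : Monotone F) (hx : IsHyperplaneMin F k c x) (hj : k j = 0) (ht : 0 ≤ t) :
    IsHyperplaneMin F k c (x - Pi.single j t) := by
  refine ⟨by rw [dotProduct_sub, dotProduct_single, hj, zero_mul, sub_zero, hx.1], fun y hy ↦ ?_⟩
  exact (hF (sub_le_self x (Pi.single_nonneg.mpr ht))).trans (hx.2 hy)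

theorem weight_ne_zero_of_existsUnique_isHyperplaneMin {β : Type*} [Preorder β] [Ring R]
    [PartialOrder R] [IsOrderedRing R] [Nontrivial R] {F : (κ → R) → β} {k : κ → R} {c : R}
    (hF : Monotone F) (huniq : ∃! x, IsHyperplaneMin F k c x) (j : κ) : k j ≠ 0 := by
  classical
  intro hj
  obtain ⟨x, hx⟩ := huniq.exists
  have h_eq : x - Pi.single j 1 = x := huniq.unique (hx.sub_single hF hj zero_le_one) hx
  simpa using congrFun h_eq j

end WeightedHyperplane

section MaxPlusForm

variable {κ : Type*}

/-- The max-plus linear form `x ↦ ⨆ j, (a j + x j)` on real vectors with coefficients `a`, so that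
`objF A x i` is `maxPlusForm (A i) x`. -/
def maxPlusForm (a : κ → EReal) (x : κ → ℝ) : EReal :=
  ⨆ j, a j + (x j : EReal)

theorem add_le_maxPlusForm (a : κ → EReal) (x : κ → ℝ) (j : κ) :
    a j + (x j : EReal) ≤ maxPlusForm a x :=
  le_iSup (fun l ↦ a l + (x l : EReal)) j

theorem maxPlusForm_mono (a : κ → EReal) : Monotone (maxPlusForm a) :=
  fun _ _ hxy ↦ iSup_mono fun j ↦ add_le_add_right (EReal.coe_le_coe (hxy j)) (a j)

theorem maxPlusForm_sup (a : κ → EReal) (x y : κ → ℝ) :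
    maxPlusForm a (x ⊔ y) = maxPlusForm a x ⊔ maxPlusForm a y := by
  simp only [maxPlusForm, Pi.sup_apply, EReal.coe_strictMono.monotone.map_sup, ← max_add_add_left,
    iSup_sup_eq]

theorem bot_lt_maxPlusForm {a : κ → EReal} (ha : ∃ j, a j ≠ ⊥) (x : κ → ℝ) :
    ⊥ < maxPlusForm a x := by
  obtain ⟨j, hj⟩ := ha
  exact (EReal.bot_lt_add_iff.mpr ⟨bot_lt_iff_ne_bot.mpr hj, EReal.bot_lt_coe _⟩).trans_le
    (add_le_maxPlusForm a x j)

theorem maxPlusForm_lt_of_strongLT [Finite κ] {a : κ → EReal} (ha_top : ∀ j, a j ≠ ⊤)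
    (ha_bot : ∃ j, a j ≠ ⊥) {x y : κ → ℝ} (hxy : StrongLT x y) :
    maxPlusForm a x < maxPlusForm a y := by
  have : Nonempty κ := ha_bot.nonempty
  obtain ⟨j, hj⟩ : ∃ j, a j + (x j : EReal) = maxPlusForm a x := exists_eq_ciSup_of_finite
  have hj_bot : a j ≠ ⊥ := by
    intro h
    rw [h, EReal.bot_add] at hj
    exact (bot_lt_maxPlusForm ha_bot x).ne hj
  lift a j to ℝ using ⟨ha_top j, hj_bot⟩ with r hr
  calc maxPlusForm a x = r + (x j : EReal) := hj.symm
    _ < r + (y j : EReal) := EReal.add_lt_add_left_coe (EReal.coe_lt_coe (hxy j)) r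
    _ ≤ maxPlusForm a y := hr ▸ add_le_maxPlusForm a y j

end MaxPlusForm

theorem stmt_15_general {ι κ : Type*} [Fintype κ] {A : Matrix ι κ EReal} {k : κ → ℝ} {c : ℝ}
    (hk : ∀ j, 0 ≤ k j) (hrow : ∃ i, (∀ j, A i j ≠ ⊤) ∧ ∃ j, A i j ≠ ⊥)
    (hsolv : ∃ x, IsHyperplaneMin (fun x i ↦ maxPlusForm (A i) x) k c x) :
    (∃! x, IsHyperplaneMin (fun x i ↦ maxPlusForm (A i) x) k c x) ↔ ∀ j, 0 < k j := by
  constructor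
  · have hmono : Monotone fun x i ↦ maxPlusForm (A i) x :=
      fun _ _ hxy i ↦ maxPlusForm_mono (A i) hxy
    exact fun huniq j ↦
      (hk j).lt_of_ne' (weight_ne_zero_of_existsUnique_isHyperplaneMin hmono huniq j)
  · intro hpos
    obtain ⟨i, hi_top, hi_bot⟩ := hrow
    refine existsUnique_of_exists_of_unique hsolv fun x y hx hy ↦ ?_
    exact (hx.apply i).unique (fun u v ↦ (maxPlusForm_sup (A i) u v).le)
      (fun _ _ ↦ maxPlusForm_lt_of_strongLT hi_top hi_bot) hpos (hy.apply i)

theorem stmt_15 {m n : ℕ} (hm : 1 ≤ m) (hn : 1 ≤ n)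
    (A : Matrix (Fin m) (Fin n) EReal) (hA : ∀ i j, A i j ≠ ⊤)
    (k : Fin n → ℝ) (hk : ∀ j, 0 ≤ k j) (hk0 : ∃ j, k j ≠ 0) (c : ℝ)
    (hrow : ∀ i, ∃ j, A i j ≠ ⊥)
    (hcol : ∀ j, (∀ i, A i j = ⊥) → 0 < k j)
    (hsolv : ∃ xt : Fin n → ℝ, IsOptimal A k c xt) :
    (∃! xt : Fin n → ℝ, IsOptimal A k c xt) ↔ ∀ j, 0 < k j :=
  stmt_15_general hk ⟨⟨0, hm⟩, hA _, hrow _⟩ hsolv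
end
end
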